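/- Let G be a prolific graph. Then e(L^3(G)) ≥ e(G) + 4. -/

import Mathlib

open SimpleGraph

/-- A bundled simple graph: a vertex type together with a simple graph on it. -/
structure FGraph where
  V : Type
  G : SimpleGraph V

/-- The line graph of a bundled graph: the vertices are the edges of `G`, two distinct
edges being adjacent iff they share an endpoint. -/
def FGraph.line (X : FGraph) : FGraph := ⟨X.G.edgeSet, X.G.lineGraph⟩

/-- The `k`-fold iterated line graph `L^k(G)`. -/
def FGraph.iter (X : FGraph) (k : ℕ) : FGraph := FGraph.line^[k] X

/-- The number of vertices `n(G)`. -/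
noncomputable def FGraph.n (X : FGraph) : ℕ := Nat.card X.V

/-- The number of edges `e(G)`. -/
noncomputable def FGraph.e (X : FGraph) : ℕ := Nat.card X.G.edgeSet

/-- The degree of a vertex. -/
noncomputable def FGraph.deg (X : FGraph) (v : X.V) : ℕ := Nat.card (X.G.neighborSet v)

/-- The maximum degree `Δ(G)`. -/
noncomputable def FGraph.maxDeg (X : FGraph) : ℕ := sSup (Set.range X.deg)

/-- The minimum degree `δ(G)`. -/
noncomputable def FGraph.minDeg (X : FGraph) : ℕ := sInf (Set.range X.deg)

/-- The average degree `d(G) = 2e(G)/n(G)`, as a rational number. -/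
noncomputable def FGraph.avgDeg (X : FGraph) : ℚ := 2 * (X.e : ℚ) / (X.n : ℚ)

/-- A graph is prolific if it is connected and isomorphic to no path graph `P_k`,
to no cycle graph `C_k`, and not to the star `K_{1,3}`. -/
def FGraph.Prolific (X : FGraph) : Prop :=
  X.G.Connected ∧
  (∀ k : ℕ, IsEmpty (X.G ≃g pathGraph k)) ∧
  (∀ k : ℕ, IsEmpty (X.G ≃g cycleGraph k)) ∧
  IsEmpty (X.G ≃g completeBipartiteGraph (Fin 1) (Fin 3))

/-!
Write `n_k` for the number of vertices of `L^k(G)`. Since `2 e(L(H)) + 2 e(H) = ∑ d(v)²` for every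
finite graph `H`, the second difference `n_{k+2} - 2 n_{k+1} + n_k` is
`∑ (d(v) - 1) (d(v) - 2) / 2`, the sum running over `L^k(G)`, and is therefore at least the number
of vertices of degree `≥ 3` in `L^k(G)`. A prolific graph has such a vertex, otherwise it would be
a path or a cycle; its line graph has one, otherwise it would be `K_{1,3}`; and `L²(G)` has two,
coming from a triangle of `L(G)` through a vertex of degree `≥ 3`. As `n_1 - n_0 ≥ -1` by
connectedness, the next differences are at least `0`, `1` and `3`, so that `n_4 - n_1 ≥ 4`.
-/

section Copies

variable {V W : Type*} {G : SimpleGraph V} {H : SimpleGraph W}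

theorem nonempty_iso_of_copy_of_exists_adj [Nonempty W] (hG : G.Connected) (f : Copy H G)
    (hf : ∀ x y, G.Adj (f x) y → ∃ x', H.Adj x x' ∧ f x' = y) : Nonempty (G ≃g H) := by
  have hsurj : Function.Surjective f := by
    by_contra hns
    obtain ⟨y, hy⟩ := not_forall.mp hns
    obtain ⟨x₀⟩ := ‹Nonempty W›
    obtain ⟨p⟩ := hG.preconnected (f x₀) y
    obtain ⟨d, -, ⟨x, hx⟩, hd⟩ := p.exists_boundary_dart (Set.range f) ⟨x₀, rfl⟩ hy
    obtain ⟨x', -, hx'⟩ := hf x d.snd (hx ▸ d.adj)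
    exact hd ⟨x', hx'⟩
  refine ⟨Iso.symm ⟨Equiv.ofBijective f ⟨f.injective, hsurj⟩, fun {x y} ↦ ⟨fun h ↦ ?_, ?_⟩⟩⟩
  · obtain ⟨x', hadj, hx'⟩ := hf x (f y) h
    exact f.injective hx' ▸ hadj
  · exact f.toHom.map_adj

theorem exists_adj_of_copy_of_degree_le (f : Copy H G) (x : W) [Fintype (H.neighborSet x)]
    [Fintype (G.neighborSet (f x))] (h : G.degree (f x) ≤ H.degree x) (y : V)
    (hy : G.Adj (f x) y) : ∃ x', H.Adj x x' ∧ f x' = y := by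
  have hsub : (H.neighborFinset x).map f.toEmbedding ⊆ G.neighborFinset (f x) := fun z hz ↦ by
    obtain ⟨x', hx', rfl⟩ := Finset.mem_map.mp hz
    exact (G.mem_neighborFinset _ _).mpr (f.toHom.map_adj ((H.mem_neighborFinset _ _).mp hx'))
  have heq := Finset.eq_of_subset_of_card_le hsub (by simpa using h)
  obtain ⟨x', hx', rfl⟩ := Finset.mem_map.mp (heq ▸ (G.mem_neighborFinset _ _).mpr hy)
  exact ⟨x', (H.mem_neighborFinset _ _).mp hx', rfl⟩

end Copies

section Recognition

variable {V : Type*} {G : SimpleGraph V}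

theorem nonempty_iso_completeBipartiteGraph_of_forall_adj (hG : G.Connected) (v : V)
    [Fintype (G.neighborSet v)] (hleaf : ∀ a, G.Adj v a → ∀ w, G.Adj a w → w = v) :
    Nonempty (G ≃g completeBipartiteGraph (Fin 1) (Fin (G.degree v))) := by
  let φ : G.neighborSet v ≃ Fin (G.degree v) :=
    Fintype.equivFinOfCardEq (G.card_neighborSet_eq_degree v)
  have hφ (i) : G.Adj v (φ.symm i) := (φ.symm i).2
  let f : Copy (completeBipartiteGraph (Fin 1) (Fin (G.degree v))) G :=
    { toHom :=
        { toFun := Sum.elim (fun _ ↦ v) (fun i ↦ φ.symm i)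
          map_rel' := by
            rintro (_ | i) (_ | j) h
            · simp at h
            · exact hφ j
            · exact (hφ i).symm
            · simp at h }
      injective' := Function.Injective.sumElim (Function.injective_of_subsingleton _)
        (Subtype.val_injective.comp φ.symm.injective) fun _ i ↦ (hφ i).ne }
  refine nonempty_iso_of_copy_of_exists_adj hG f ?_
  rintro (_ | i) y hy
  · exact ⟨.inr (φ ⟨y, hy⟩), by simp, congrArg Subtype.val (φ.symm_apply_apply ⟨y, hy⟩)⟩
  · exact ⟨.inl 0, by simp, (hleaf _ (hφ i) y hy).symm⟩

theorem two_le_degree_of_adj_of_adj {v a b : V} [Fintype (G.neighborSet v)] (ha : G.Adj v a)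
    (hb : G.Adj v b) (hab : a ≠ b) : 2 ≤ G.degree v :=
  Finset.one_lt_card.mpr ⟨a, by simpa, b, by simpa, hab⟩

variable [G.LocallyFinite]

theorem nonempty_iso_cycleGraph_of_isCycle (hG : G.Connected) (hdeg : ∀ v, G.degree v ≤ 2) {v : V}
    {p : G.Walk v v} (hp : p.IsCycle) : Nonempty (G ≃g cycleGraph p.length) := by
  have hlen := hp.three_le_length
  obtain ⟨f⟩ := (cycleGraph_isContained_iff hlen).mpr ⟨v, p, hp, rfl⟩
  obtain ⟨n, hn⟩ := Nat.exists_eq_add_of_le' hlen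
  rw [hn] at f ⊢
  exact nonempty_iso_of_copy_of_exists_adj hG f fun x ↦ exists_adj_of_copy_of_degree_le f x <|
    (hdeg _).trans cycleGraph_degree_three_le.ge

/- The path graph of a longest path is a copy that misses no neighbour: an interior vertex already
has two neighbours on the path, and a further neighbour of an endpoint would either extend the path
or close a cycle. -/
theorem exists_nonempty_iso_pathGraph_of_isTree [Finite V] (hG : G.IsTree)
    (hdeg : ∀ v, G.degree v ≤ 2) : ∃ n, Nonempty (G ≃g pathGraph n) := by
  classical
  have := hG.connected.nonempty
  obtain ⟨u, v, p, hp, hmax⟩ := Walk.exists_isPath_forall_isPath_length_le_length G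
  have hstart {w : V} (hw : G.Adj u w) : w = p.snd := by
    refine hG.isAcyclic.eq_snd_of_adj_start hp hw ?_
    by_contra hmem
    simpa using hmax _ _ _ (hp.cons (h := hw.symm) hmem)
  have hend {w : V} (hw : G.Adj v w) : w = p.penultimate := by
    refine hG.isAcyclic.eq_penultimate_of_adj_end hp hw ?_
    by_contra hmem
    simpa using hmax _ _ _ (hp.concat hmem hw)
  have hpos {a b : V} (h : G.Adj a b) : 0 < p.length := hmax _ _ _ (Walk.IsPath.of_adj h)
  have hget (i : Fin (p.length + 1)) : hp.pathGraphCopy i = p.getVert i :=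
    p.support_getElem_eq_getVert _
  refine ⟨_, nonempty_iso_of_copy_of_exists_adj hG.connected hp.pathGraphCopy fun i y hy ↦ ?_⟩
  have hlen := hpos hy
  obtain hi | hi | ⟨hi, hi'⟩ : (i : ℕ) = 0 ∨ (i : ℕ) = p.length ∨ 0 < (i : ℕ) ∧ i < p.length := by
    lia
  · refine ⟨⟨1, by lia⟩, by simp [pathGraph_adj, hi], ?_⟩
    rw [hget, hi, p.getVert_zero] at hy
    rw [hget, hstart hy]
  · refine ⟨⟨p.length - 1, by lia⟩, by simp [pathGraph_adj]; lia, ?_⟩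
    rw [hget, hi, p.getVert_length] at hy
    rw [hget, hend hy]
  · refine exists_adj_of_copy_of_degree_le _ i ((hdeg _).trans ?_) y hy
    exact two_le_degree_of_adj_of_adj (a := ⟨i - 1, by lia⟩) (b := ⟨i + 1, by lia⟩)
      (by simp [pathGraph_adj]; lia) (by simp [pathGraph_adj]) (by simp; lia)

theorem exists_three_le_degree [Finite V] (hG : G.Connected)
    (hpath : ∀ k, IsEmpty (G ≃g pathGraph k)) (hcycle : ∀ k, IsEmpty (G ≃g cycleGraph k)) :
    ∃ v, 3 ≤ G.degree v := by
  by_contra! hlt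
  have hdeg (v) : G.degree v ≤ 2 := Nat.le_of_lt_succ (hlt v)
  have hacyclic : G.IsAcyclic := fun v p hp ↦
    not_nonempty_iff.mpr (hcycle _) (nonempty_iso_cycleGraph_of_isCycle hG hdeg hp)
  obtain ⟨n, hn⟩ := exists_nonempty_iso_pathGraph_of_isTree ⟨hG, hacyclic⟩ hdeg
  exact not_nonempty_iff.mpr (hpath n) hn

theorem exists_adj_three_le_degree [Finite V] (hG : G.Connected)
    (hpath : ∀ k, IsEmpty (G ≃g pathGraph k)) (hcycle : ∀ k, IsEmpty (G ≃g cycleGraph k))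
    (hstar : IsEmpty (G ≃g completeBipartiteGraph (Fin 1) (Fin 3))) :
    ∃ v a, G.Adj v a ∧ 3 ≤ G.degree v ∧ 5 ≤ G.degree v + G.degree a := by
  obtain ⟨v, hv⟩ := exists_three_le_degree hG hpath hcycle
  by_contra! hsmall
  have hleaf (a) (ha : G.Adj v a) (w) (hw : G.Adj a w) : w = v := by
    by_contra hwv
    have := hsmall v a ha hv
    have := two_le_degree_of_adj_of_adj hw ha.symm hwv
    lia
  have hv3 : G.degree v = 3 := by
    obtain ⟨a, ha⟩ := (G.degree_pos_iff_exists_adj v).mp (by lia)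
    have := hsmall v a ha hv
    have := (G.degree_pos_iff_exists_adj a).mpr ⟨v, ha.symm⟩
    lia
  exact not_nonempty_iff.mpr hstar
    (hv3 ▸ nonempty_iso_completeBipartiteGraph_of_forall_adj hG v hleaf)

end Recognition

section LineGraph

open Finset

variable {V : Type*}

theorem sum_edgeFinset_sum_toFinset [Fintype V] [DecidableEq V] (G : SimpleGraph V)
    [Fintype G.edgeSet] [G.LocallyFinite] {M : Type*} [AddCommMonoid M] (f : V → M) :
    ∑ e ∈ G.edgeFinset, ∑ v ∈ e.toFinset, f v = ∑ v, G.degree v • f v := by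
  rw [sum_comm' (t' := univ) (s' := fun v ↦ G.incidenceFinset v) (by simp [incidenceSet])]
  simp only [sum_const, card_incidenceFinset_eq_degree]

section LocallyFinite

variable {G : SimpleGraph V} [G.LocallyFinite] [G.lineGraph.LocallyFinite]

theorem degree_lineGraph_add_two {u v : V} (h : G.Adj u v) :
    G.lineGraph.degree ⟨s(u, v), h⟩ + 2 = G.degree u + G.degree v := by
  classical
  set e : G.edgeSet := ⟨s(u, v), h⟩
  have hinter : G.incidenceFinset u ∩ G.incidenceFinset v = {s(u, v)} := by
    simpa [← coe_inj] using G.incidenceSet_inter_incidenceSet_of_adj h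
  have hunion : insert s(u, v) ((G.lineGraph.neighborFinset e).map (.subtype _)) =
      G.incidenceFinset u ∪ G.incidenceFinset v := by
    ext f
    by_cases hf : f = s(u, v)
    · simp [hf, h, incidenceSet]
    · simp only [mem_insert, hf, false_or, mem_map, mem_neighborFinset, lineGraph_adj_iff_exists,
        mem_union, mem_incidenceFinset, incidenceSet, e]
      have he {h'} : e ≠ ⟨f, h'⟩ := fun heq ↦ hf (congrArg Subtype.val heq).symm
      aesop
  rw [← G.card_incidenceFinset_eq_degree u, ← G.card_incidenceFinset_eq_degree v,
    ← card_union_add_card_inter, hinter, ← hunion, card_insert_of_notMem (by simp [e]), card_map,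
    card_neighborFinset_eq_degree, card_singleton]

theorem exists_triangle_lineGraph_three_le_degree {v a : V} (ha : G.Adj v a)
    (hv : 3 ≤ G.degree v) (hva : 5 ≤ G.degree v + G.degree a) :
    ∃ e f g, G.lineGraph.Adj e f ∧ G.lineGraph.Adj e g ∧ G.lineGraph.Adj f g ∧
      3 ≤ G.lineGraph.degree e := by
  classical
  obtain ⟨b, hb, c, hc, hbc⟩ : ∃ b ∈ (G.neighborFinset v).erase a,
      ∃ c ∈ (G.neighborFinset v).erase a, b ≠ c := by
    rw [← one_lt_card, card_erase_of_mem (by simpa)]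
    exact Nat.lt_sub_of_add_lt hv
  simp only [mem_erase, mem_neighborFinset] at hb hc
  have hadj {x y : V} (hx : G.Adj v x) (hy : G.Adj v y) (hxy : x ≠ y) :
      G.lineGraph.Adj ⟨s(v, x), hx⟩ ⟨s(v, y), hy⟩ :=
    lineGraph_adj_iff_exists.mpr
      ⟨fun h ↦ hxy (Sym2.congr_right.mp (congrArg Subtype.val h)), v, by simp⟩
  have := degree_lineGraph_add_two ha
  exact ⟨_, _, _, hadj ha hb.2 hb.1.symm, hadj ha hc.2 hc.1.symm, hadj hb.2 hc.2 hbc, by lia⟩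

theorem two_le_card_three_le_degree_lineGraph [Fintype G.edgeSet] {a b c : V} (hab : G.Adj a b)
    (hac : G.Adj a c) (hbc : G.Adj b c) (ha : 3 ≤ G.degree a) :
    2 ≤ #{e | 3 ≤ G.lineGraph.degree e} := by
  have hb := two_le_degree_of_adj_of_adj hab.symm hbc hac.ne
  have hc := two_le_degree_of_adj_of_adj hac.symm hbc.symm hab.ne
  have := degree_lineGraph_add_two hab
  have := degree_lineGraph_add_two hac
  refine one_lt_card.mpr ⟨⟨s(a, b), hab⟩, ?_, ⟨s(a, c), hac⟩, ?_,
    fun h ↦ hbc.ne (Sym2.congr_right.mp (congrArg Subtype.val h))⟩ <;>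
    simp only [mem_filter_univ] <;> lia

end LocallyFinite

variable [Fintype V] (G : SimpleGraph V) [DecidableRel G.Adj]

theorem two_mul_card_edgeSet_lineGraph_add_card_edgeSet :
    2 * (Nat.card G.lineGraph.edgeSet + Nat.card G.edgeSet) = ∑ v, G.degree v ^ 2 := by
  classical
  have hdeg (e : G.edgeSet) : G.lineGraph.degree e + 2 = ∑ v ∈ e.1.toFinset, G.degree v := by
    obtain ⟨⟨u, v⟩, h⟩ := e
    change _ = ∑ x ∈ s(u, v).toFinset, G.degree x
    rw [Sym2.toFinset_mk_eq, sum_pair (G.ne_of_adj h)]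
    exact degree_lineGraph_add_two h
  calc 2 * (Nat.card G.lineGraph.edgeSet + Nat.card G.edgeSet)
      = ∑ e : G.edgeSet, (G.lineGraph.degree e + 2) := by
        simp [sum_add_distrib, sum_degrees_eq_twice_card_edges, Nat.card_eq_fintype_card,
          edgeFinset_card, mul_add, mul_comm]
    _ = ∑ e ∈ G.edgeFinset, ∑ v ∈ e.toFinset, G.degree v := by
        simp only [hdeg]
        exact Eq.symm <| sum_subtype G.edgeFinset (fun _ ↦ mem_edgeFinset) _
    _ = ∑ v, G.degree v ^ 2 := by
        simp only [sum_edgeFinset_sum_toFinset, smul_eq_mul, sq]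

theorem two_mul_card_edgeSet_add_card_le :
    2 * Nat.card G.edgeSet + #{v | 3 ≤ G.degree v} ≤
      Nat.card G.lineGraph.edgeSet + Nat.card V := by
  classical
  have hvertex (v : V) : 3 * G.degree v + 2 * (if 3 ≤ G.degree v then 1 else 0) ≤
      G.degree v ^ 2 + 2 := by
    generalize G.degree v = d
    split_ifs with hd
    · nlinarith
    · interval_cases d <;> simp
  have hsum := sum_le_sum fun v (_ : v ∈ univ) ↦ hvertex v
  have hedges : ∑ v, G.degree v = 2 * Nat.card G.edgeSet := by
    rw [sum_degrees_eq_twice_card_edges, edgeFinset_card, Nat.card_eq_fintype_card]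
  rw [sum_add_distrib, sum_add_distrib, ← mul_sum, ← mul_sum, ← card_filter, hedges,
    ← two_mul_card_edgeSet_lineGraph_add_card_edgeSet, sum_const, card_univ,
    ← Nat.card_eq_fintype_card, smul_eq_mul] at hsum
  lia

end LineGraph

/-- For a prolific graph, `e(L³(G)) ≥ e(G) + 4`. -/
theorem edges_iter_three (X : FGraph) [Finite X.V] (hp : X.Prolific) :
    (X.iter 3).e ≥ X.e + 4 := by
  classical
  have := Fintype.ofFinite X.V
  obtain ⟨hconn, hpath, hcycle, hstar⟩ := hp
  obtain ⟨v, a, hva, hv, hdeg⟩ := exists_adj_three_le_degree hconn hpath hcycle hstar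
  obtain ⟨e, f, g, hef, heg, hfg, he⟩ := exists_triangle_lineGraph_three_le_degree hva hv hdeg
  have hcount₀ : 1 ≤ Finset.card {v | 3 ≤ X.G.degree v} := Finset.card_pos.mpr ⟨v, by simpa⟩
  have hcount₁ : 1 ≤ Finset.card {e | 3 ≤ X.G.lineGraph.degree e} :=
    Finset.card_pos.mpr ⟨e, by simpa⟩
  have hcount₂ := two_le_card_three_le_degree_lineGraph hef heg hfg he
  have hsecond₀ := two_mul_card_edgeSet_add_card_le X.G
  have hsecond₁ := two_mul_card_edgeSet_add_card_le X.G.lineGraph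
  have hsecond₂ := two_mul_card_edgeSet_add_card_le X.G.lineGraph.lineGraph
  have hfirst := hconn.card_vert_le_card_edgeSet_add_one
  change Nat.card X.G.edgeSet + 4 ≤ Nat.card X.G.lineGraph.lineGraph.lineGraph.edgeSet
  lia
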